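/- Let S ⊆ ℤ² be periodic with N_S(x) ≤ 3 for every x ∈ S, and suppose S has density exactly 1/2. Then N_S(x) ≥ 2 for every x ∈ S and N_S(y) ≥ 4 for every y ∉ S; in particular S is a still Life. -/

import Mathlib

open Filter Topology

/-- `y` is a neighbor of `x` in the 8-point (Moore) neighborhood of `ℤ²`. -/
def IsNbr (x y : ℤ × ℤ) : Prop :=
  y ≠ x ∧ |y.1 - x.1| ≤ 1 ∧ |y.2 - x.2| ≤ 1

/-- `N_S(x)`: the number of neighbors of `x` lying in `S`. -/
noncomputable def nbrCount (S : Set (ℤ × ℤ)) (x : ℤ × ℤ) : ℕ :=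
  Set.ncard {y ∈ S | IsNbr x y}

/-- The box `B_r = {x : |x₁| < r, |x₂| < r}`. -/
def box (r : ℕ) : Set (ℤ × ℤ) :=
  {x | |x.1| < (r : ℤ) ∧ |x.2| < (r : ℤ)}

/-- `S` has density `d`: the sequence `|S ∩ B_r| / (2r-1)²` tends to `d`. -/
def HasDensity (S : Set (ℤ × ℤ)) (d : ℝ) : Prop :=
  Tendsto (fun r : ℕ => (Set.ncard (S ∩ box r) : ℝ) / (2 * (r : ℝ) - 1) ^ 2) atTop (𝓝 d)

/-- `S ⊆ ℤ²` is periodic: invariant under two independent positive translations. -/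
def Periodic (S : Set (ℤ × ℤ)) : Prop :=
  ∃ p q : ℤ, 0 < p ∧ 0 < q ∧
    (∀ x : ℤ × ℤ, x ∈ S ↔ (x.1 + p, x.2) ∈ S) ∧
    (∀ x : ℤ × ℤ, x ∈ S ↔ (x.1, x.2 + q) ∈ S)

/-- A still Life: a fixed point of the Game of Life transition rule. -/
def StillLife (S : Set (ℤ × ℤ)) : Prop :=
  (∀ x ∉ S, nbrCount S x ≠ 3) ∧
  (∀ x ∈ S, 2 ≤ nbrCount S x) ∧
  (∀ x ∈ S, nbrCount S x ≤ 3)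

/-!
A configuration of density one half has two live side neighbors per cell on average. Give every cell
`(x, y)` the charge `2 - sideDeg`, of mean zero, and repair the negative charges: if `(x, y)` has at
least three live side neighbors, each of them lying between two others sends one unit to `(x, y)`.
The two others are then corner neighbors of the sender, so a live cell of degree at most three has
few live side neighbors whenever it sends anything, and every final charge is nonnegative. Having
mean zero, all final charges vanish. This forces degree at least two on live cells, and two or three
live side neighbors on dead cells, leaving, up to reflection, one possible neighborhood for a dead
cell of degree at most three. That neighborhood produces a nearby dead cell with four live side
neighbors, a contradiction.
-/

theorem sum_prod_add_right {M N R : Type*} [AddGroup M] [AddGroup N] [Fintype M] [Fintype N]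
    [AddCommMonoid R] (f : M → N → R) (a : M) (b : N) :
    ∑ z : M × N, f (z.1 + a) (z.2 + b) = ∑ z : M × N, f z.1 z.2 :=
  Equiv.sum_comp (Equiv.addRight (a, b)) fun z : M × N => f z.1 z.2

section CellState

variable {M N : Type*} {T : Set (M × N)} {x : M} {y : N}

/-- The state of the cell `(x, y)` in the configuration `T`: `1` if it is live and `0` if it is
dead. The grid `M × N` is `ℤ × ℤ` or a torus; the state is an integer so that states can be
subtracted. -/
noncomputable def cellState (T : Set (M × N)) (x : M) (y : N) : ℤ :=
  T.indicator 1 (x, y)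

theorem cellState_of_mem (h : (x, y) ∈ T) : cellState T x y = 1 :=
  Set.indicator_of_mem h 1

theorem cellState_of_notMem (h : (x, y) ∉ T) : cellState T x y = 0 :=
  Set.indicator_of_notMem h 1

theorem notMem_of_cellState_eq_zero (h : cellState T x y = 0) : (x, y) ∉ T :=
  fun hT => zero_ne_one (h.symm.trans (cellState_of_mem hT))

theorem cellState_eq_zero_or_one (T : Set (M × N)) (x : M) (y : N) :
    cellState T x y = 0 ∨ cellState T x y = 1 :=
  (em ((x, y) ∈ T)).symm.imp cellState_of_notMem cellState_of_mem

theorem sum_cellState [Fintype M] [Fintype N] (T : Set (M × N)) :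
    ∑ z : M × N, cellState T z.1 z.2 = T.ncard := by
  classical
  simp only [cellState, Prod.mk.eta, Set.indicator_apply, Pi.one_apply, Finset.sum_boole,
    Set.ncard_eq_toFinset_card', Set.filter_mem_univ_eq_toFinset]

end CellState

section Torus

variable {M N : Type*} [AddCommGroupWithOne M] [AddCommGroupWithOne N]
  {T : Set (M × N)} {x : M} {y : N}

/-- The number of live cells sharing a side with `(x, y)`. -/
noncomputable def sideDeg (T : Set (M × N)) (x : M) (y : N) : ℤ :=
  cellState T (x + 1) y + cellState T (x - 1) y + cellState T x (y + 1) + cellState T x (y - 1)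

/-- The number of live cells sharing only a corner with `(x, y)`. -/
noncomputable def cornerDeg (T : Set (M × N)) (x : M) (y : N) : ℤ :=
  cellState T (x + 1) (y + 1) + cellState T (x - 1) (y - 1) +
    (cellState T (x - 1) (y + 1) + cellState T (x + 1) (y - 1))

/-- The number of live cells among the eight neighbors of `(x, y)`, counted with multiplicity on a
torus in which these neighbors are not distinct. -/
noncomputable def mooreDeg (T : Set (M × N)) (x : M) (y : N) : ℤ :=
  sideDeg T x y + cornerDeg T x y

/-- The charge arriving at `(x, y)`: one unit from each live side neighbor that lies between two
further live side neighbors of `(x, y)`. -/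
noncomputable def receivedCharge (T : Set (M × N)) (x : M) (y : N) : ℤ :=
  (cellState T (x + 1) y + cellState T (x - 1) y) *
      (cellState T x (y + 1) * cellState T x (y - 1)) +
    (cellState T x (y + 1) + cellState T x (y - 1)) *
      (cellState T (x + 1) y * cellState T (x - 1) y)

/-- The charge leaving `(x, y)` under the rule of `receivedCharge`. The two side neighbors flanking
`(x, y)` around a common cell are corner neighbors of `(x, y)` in non-opposite positions, which
makes the total a product of two sums over opposite corners. -/
noncomputable def givenCharge (T : Set (M × N)) (x : M) (y : N) : ℤ :=
  cellState T x y *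
    ((cellState T (x + 1) (y + 1) + cellState T (x - 1) (y - 1)) *
      (cellState T (x - 1) (y + 1) + cellState T (x + 1) (y - 1)))

/-- The final charge of `(x, y)`, starting from `2 - sideDeg T x y`. -/
noncomputable def finalCharge (T : Set (M × N)) (x : M) (y : N) : ℤ :=
  2 - sideDeg T x y + receivedCharge T x y - givenCharge T x y

/-- A configuration in which every cell ends with charge zero: the case of equality for toroidal
configurations whose live cells have degree at most three, all of density at most one half. -/
def IsNeutral (T : Set (M × N)) : Prop :=
  ∀ x y, finalCharge T x y = 0

theorem sideDeg_eq_add_signs (T : Set (M × N)) (x : M) (y : N) {a : M} {b : N}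
    (ha : a = 1 ∨ a = -1) (hb : b = 1 ∨ b = -1) :
    sideDeg T x y = cellState T (x + a) y + cellState T (x - a) y +
      cellState T x (y + b) + cellState T x (y - b) := by
  rcases ha with rfl | rfl <;> rcases hb with rfl | rfl <;>
    simp only [sideDeg, sub_neg_eq_add, ← sub_eq_add_neg] <;> ring

theorem givenCharge_eq_mul_signs (T : Set (M × N)) (x : M) (y : N) {a : M} {b : N}
    (ha : a = 1 ∨ a = -1) (hb : b = 1 ∨ b = -1) :
    givenCharge T x y = cellState T x y *
      ((cellState T (x + a) (y + b) + cellState T (x - a) (y - b)) *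
        (cellState T (x - a) (y + b) + cellState T (x + a) (y - b))) := by
  rcases ha with rfl | rfl <;> rcases hb with rfl | rfl <;>
    simp only [givenCharge, sub_neg_eq_add, ← sub_eq_add_neg] <;> ring

theorem sideDeg_receivedCharge_cases (T : Set (M × N)) (x : M) (y : N) :
    0 ≤ sideDeg T x y ∧ sideDeg T x y ≤ 2 ∧ receivedCharge T x y = 0 ∨
      sideDeg T x y = 3 ∧ receivedCharge T x y = 1 ∨
      sideDeg T x y = 4 ∧ receivedCharge T x y = 4 := by
  unfold sideDeg receivedCharge
  rcases cellState_eq_zero_or_one T (x + 1) y with h₁ | h₁ <;>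
  rcases cellState_eq_zero_or_one T (x - 1) y with h₂ | h₂ <;>
  rcases cellState_eq_zero_or_one T x (y + 1) with h₃ | h₃ <;>
  rcases cellState_eq_zero_or_one T x (y - 1) with h₄ | h₄ <;>
  norm_num [h₁, h₂, h₃, h₄]

theorem givenCharge_of_notMem (h : (x, y) ∉ T) : givenCharge T x y = 0 := by
  rw [givenCharge, cellState_of_notMem h, zero_mul]

theorem cornerDeg_givenCharge_cases (h : (x, y) ∈ T) :
    0 ≤ cornerDeg T x y ∧ givenCharge T x y = 0 ∨ 2 ≤ cornerDeg T x y ∧ givenCharge T x y = 1 ∨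
      3 ≤ cornerDeg T x y ∧ givenCharge T x y = 2 ∨ cornerDeg T x y = 4 := by
  unfold cornerDeg givenCharge
  rw [cellState_of_mem h]
  rcases cellState_eq_zero_or_one T (x + 1) (y + 1) with h₁ | h₁ <;>
  rcases cellState_eq_zero_or_one T (x - 1) (y - 1) with h₂ | h₂ <;>
  rcases cellState_eq_zero_or_one T (x - 1) (y + 1) with h₃ | h₃ <;>
  rcases cellState_eq_zero_or_one T (x + 1) (y - 1) with h₄ | h₄ <;>
  norm_num [h₁, h₂, h₃, h₄]

theorem finalCharge_nonneg (hdeg : (x, y) ∈ T → mooreDeg T x y ≤ 3) :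
    0 ≤ finalCharge T x y := by
  have hside := sideDeg_receivedCharge_cases T x y
  unfold mooreDeg at hdeg
  unfold finalCharge
  by_cases h : (x, y) ∈ T
  · have hcorner := cornerDeg_givenCharge_cases h
    have := hdeg h
    omega
  · rw [givenCharge_of_notMem h]
    omega

section Sum

variable [Fintype M] [Fintype N]

theorem sum_sideDeg (T : Set (M × N)) : ∑ z : M × N, sideDeg T z.1 z.2 = 4 * T.ncard := by
  have h₁ := sum_prod_add_right (cellState T) 1 0
  have h₂ := sum_prod_add_right (cellState T) (-1) 0
  have h₃ := sum_prod_add_right (cellState T) 0 1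
  have h₄ := sum_prod_add_right (cellState T) 0 (-1)
  simp only [add_zero, ← sub_eq_add_neg, sum_cellState] at h₁ h₂ h₃ h₄
  simp only [sideDeg, Finset.sum_add_distrib, h₁, h₂, h₃, h₄]
  ring

theorem sum_receivedCharge_eq_sum_givenCharge (T : Set (M × N)) :
    ∑ z : M × N, receivedCharge T z.1 z.2 = ∑ z : M × N, givenCharge T z.1 z.2 := by
  have east := sum_prod_add_right (fun x y => cellState T x y *
    (cellState T (x - 1) (y + 1) * cellState T (x - 1) (y - 1))) 1 0
  have west := sum_prod_add_right (fun x y => cellState T x y *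
    (cellState T (x + 1) (y + 1) * cellState T (x + 1) (y - 1))) (-1) 0
  have north := sum_prod_add_right (fun x y => cellState T x y *
    (cellState T (x + 1) (y - 1) * cellState T (x - 1) (y - 1))) 0 1
  have south := sum_prod_add_right (fun x y => cellState T x y *
    (cellState T (x + 1) (y + 1) * cellState T (x - 1) (y + 1))) 0 (-1)
  simp only [add_zero, ← sub_eq_add_neg, add_sub_cancel_right, sub_add_cancel]
    at east west north south
  simp only [receivedCharge, add_mul, Finset.sum_add_distrib, east, west, north, south]
  simp only [← Finset.sum_add_distrib, givenCharge]
  exact Finset.sum_congr rfl fun z _ => by ring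

theorem sum_finalCharge (T : Set (M × N)) :
    ∑ z : M × N, finalCharge T z.1 z.2 = 2 * (Fintype.card (M × N) - 2 * T.ncard) := by
  simp only [finalCharge, Finset.sum_sub_distrib, Finset.sum_add_distrib, sum_sideDeg,
    sum_receivedCharge_eq_sum_givenCharge, Finset.sum_const, Finset.card_univ, nsmul_eq_mul]
  ring

theorem isNeutral_of_card_le_two_mul_ncard
    (hdeg : ∀ x y, (x, y) ∈ T → mooreDeg T x y ≤ 3)
    (hcard : Fintype.card (M × N) ≤ 2 * T.ncard) : IsNeutral T := by
  have hnonneg (z : M × N) : 0 ≤ finalCharge T z.1 z.2 := finalCharge_nonneg (hdeg z.1 z.2)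
  have hsum : ∑ z : M × N, finalCharge T z.1 z.2 = 0 :=
    le_antisymm (by rw [sum_finalCharge]; omega) (Finset.sum_nonneg fun z _ => hnonneg z)
  exact fun x y => (Finset.sum_eq_zero_iff_of_nonneg fun z _ => hnonneg z).mp hsum (x, y)
    (Finset.mem_univ _)

end Sum

namespace IsNeutral

theorem two_le_mooreDeg (hT : IsNeutral T) (h : (x, y) ∈ T) : 2 ≤ mooreDeg T x y := by
  have hbal := hT x y
  have hside := sideDeg_receivedCharge_cases T x y
  have hcorner := cornerDeg_givenCharge_cases h
  unfold finalCharge at hbal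
  unfold mooreDeg
  omega

theorem sideDeg_of_notMem (hT : IsNeutral T) (h : (x, y) ∉ T) :
    sideDeg T x y = 2 ∨ sideDeg T x y = 3 := by
  have hbal := hT x y
  have hside := sideDeg_receivedCharge_cases T x y
  rw [finalCharge, givenCharge_of_notMem h] at hbal
  omega

theorem mem_corner_or_mem_opposite (hT : IsNeutral T) (hside : sideDeg T x y ≤ 1)
    {a : M} {b : N} (ha : a = 1 ∨ a = -1) (hb : b = 1 ∨ b = -1) :
    (x + a, y + b) ∈ T ∨ (x - a, y - b) ∈ T := by
  by_contra! hdead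
  have hgiven : givenCharge T x y = 0 := by
    rw [givenCharge_eq_mul_signs T x y ha hb, cellState_of_notMem hdead.1,
      cellState_of_notMem hdead.2, add_zero, zero_mul, mul_zero]
  have hbal := hT x y
  have hcases := sideDeg_receivedCharge_cases T x y
  rw [finalCharge, hgiven] at hbal
  omega

theorem one_le_horizontal_side (hT : IsNeutral T) (h : (x, y) ∉ T) {b : N} (hb : b = 1 ∨ b = -1) :
    1 ≤ cellState T (x + 1) (y + b) + cellState T x (y + b) + cellState T (x - 1) (y + b) := by
  have h₁ := cellState_eq_zero_or_one T (x + 1) (y + b)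
  have h₂ := cellState_eq_zero_or_one T (x - 1) (y + b)
  have h₃ := cellState_eq_zero_or_one T x (y + b + b)
  by_cases hmid : (x, y + b) ∈ T
  · have := cellState_of_mem hmid
    omega
  · have hside := hT.sideDeg_of_notMem hmid
    rw [sideDeg_eq_add_signs T x _ (.inl rfl) hb, add_sub_cancel_right,
      cellState_of_notMem h] at hside
    have := cellState_of_notMem hmid
    omega

theorem one_le_vertical_side (hT : IsNeutral T) (h : (x, y) ∉ T) {a : M} (ha : a = 1 ∨ a = -1) :
    1 ≤ cellState T (x + a) (y + 1) + cellState T (x + a) y + cellState T (x + a) (y - 1) := by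
  have h₁ := cellState_eq_zero_or_one T (x + a) (y + 1)
  have h₂ := cellState_eq_zero_or_one T (x + a) (y - 1)
  have h₃ := cellState_eq_zero_or_one T (x + a + a) y
  by_cases hmid : (x + a, y) ∈ T
  · have := cellState_of_mem hmid
    omega
  · have hside := hT.sideDeg_of_notMem hmid
    rw [sideDeg_eq_add_signs T _ y ha (.inl rfl), add_sub_cancel_right,
      cellState_of_notMem h] at hside
    have := cellState_of_notMem hmid
    omega

/-- For `a = b = 1` the surroundings are as follows, the cell marked `?` being unconstrained; the
other signs give the reflections of this picture.
```
0 0 ?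
1 . 0
0 1 0
```
-/
theorem exists_surroundings_of_mooreDeg_le_three (hT : IsNeutral T) (h : (x, y) ∉ T)
    (hdeg : mooreDeg T x y ≤ 3) :
    ∃ (a : M) (b : N), (a = 1 ∨ a = -1) ∧ (b = 1 ∨ b = -1) ∧
      (cellState T (x - a) y = 1 ∧ cellState T x (y - b) = 1) ∧
      (cellState T (x + a) y = 0 ∧ cellState T x (y + b) = 0) ∧
      cellState T (x - a) (y + b) = 0 ∧ cellState T (x - a) (y - b) = 0 ∧
      cellState T (x + a) (y - b) = 0 := by
  have north := hT.one_le_horizontal_side h (.inl rfl)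
  have south := hT.one_le_horizontal_side h (.inr rfl)
  have east := hT.one_le_vertical_side h (.inl rfl)
  have west := hT.one_le_vertical_side h (.inr rfl)
  have hside := hT.sideDeg_of_notMem h
  have h₁ := cellState_eq_zero_or_one T (x + 1) y
  have h₂ := cellState_eq_zero_or_one T (x - 1) y
  have h₃ := cellState_eq_zero_or_one T x (y + 1)
  have h₄ := cellState_eq_zero_or_one T x (y - 1)
  have h₅ := cellState_eq_zero_or_one T (x + 1) (y + 1)
  have h₆ := cellState_eq_zero_or_one T (x - 1) (y + 1)
  have h₇ := cellState_eq_zero_or_one T (x - 1) (y - 1)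
  have h₈ := cellState_eq_zero_or_one T (x + 1) (y - 1)
  simp only [mooreDeg, sideDeg, cornerDeg, ← sub_eq_add_neg] at hside hdeg south west
  -- Every side of the ring holds a live cell, and at most one live corner is left for that.
  have hhorizontal : cellState T (x + 1) y + cellState T (x - 1) y = 1 := by omega
  have hvertical : cellState T x (y + 1) + cellState T x (y - 1) = 1 := by omega
  rcases h₁ with east_dead | east_live <;> rcases h₃ with north_dead | north_live
  · refine ⟨1, 1, .inl rfl, .inl rfl, ?_⟩
    omega
  · refine ⟨1, -1, .inl rfl, .inr rfl, ?_⟩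
    simp only [sub_neg_eq_add, ← sub_eq_add_neg]
    omega
  · refine ⟨-1, 1, .inr rfl, .inl rfl, ?_⟩
    simp only [sub_neg_eq_add, ← sub_eq_add_neg]
    omega
  · refine ⟨-1, -1, .inr rfl, .inr rfl, ?_⟩
    simp only [sub_neg_eq_add, ← sub_eq_add_neg]
    omega

theorem four_le_mooreDeg (hT : IsNeutral T) (h : (x, y) ∉ T) :
    4 ≤ mooreDeg T x y := by
  by_contra! hdeg
  -- With `a = b = 1`: the west and the south cell each need a live cell further southwest, and
  -- these four live cells enclose the dead southwest cell.
  obtain ⟨a, b, ha, hb, ⟨west_live, south_live⟩, ⟨east_dead, north_dead⟩,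
    nw_dead, sw_dead, se_dead⟩ :=
    hT.exists_surroundings_of_mooreDeg_le_three h (Int.le_of_lt_add_one hdeg)
  have center_dead := cellState_of_notMem h
  have wsw_live : (x - a - a, y - b) ∈ T := by
    have hside : sideDeg T (x - a) y ≤ 1 := by
      have := cellState_eq_zero_or_one T (x - a - a) y
      rw [sideDeg_eq_add_signs T _ _ ha hb, sub_add_cancel]
      omega
    refine (hT.mem_corner_or_mem_opposite hside ha hb).resolve_left ?_
    rw [sub_add_cancel]
    exact notMem_of_cellState_eq_zero north_dead
  have ssw_live : (x - a, y - b - b) ∈ T := by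
    have hside : sideDeg T x (y - b) ≤ 1 := by
      have := cellState_eq_zero_or_one T x (y - b - b)
      rw [sideDeg_eq_add_signs T _ _ ha hb, sub_add_cancel]
      omega
    refine (hT.mem_corner_or_mem_opposite hside ha hb).resolve_left ?_
    rw [sub_add_cancel]
    exact notMem_of_cellState_eq_zero east_dead
  have hside := hT.sideDeg_of_notMem (notMem_of_cellState_eq_zero sw_dead)
  rw [sideDeg_eq_add_signs T _ _ ha hb, sub_add_cancel, sub_add_cancel, west_live, south_live,
    cellState_of_mem wsw_live, cellState_of_mem ssw_live] at hside
  omega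

end IsNeutral

end Torus

section Unroll

variable {M N : Type*} [AddCommGroupWithOne M] [AddCommGroupWithOne N]

/-- The configuration on `ℤ × ℤ` obtained by unrolling the configuration `T` on `M × N`; the
periodic configurations are the unrolled configurations on tori `ZMod p × ZMod q`. -/
def unroll (T : Set (M × N)) : Set (ℤ × ℤ) :=
  {z | ((z.1 : M), (z.2 : N)) ∈ T}

theorem nbrCount_eq_mooreDeg (S : Set (ℤ × ℤ)) (x y : ℤ) :
    (nbrCount S (x, y) : ℤ) = mooreDeg S x y := by
  classical
  have h : {z ∈ S | IsNbr (x, y) z} = ((({(x + 1, y), (x + 1, y + 1), (x, y + 1), (x - 1, y + 1),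
      (x - 1, y), (x - 1, y - 1), (x, y - 1), (x + 1, y - 1)} : Finset (ℤ × ℤ)).filter (· ∈ S) :
        Finset (ℤ × ℤ)) : Set (ℤ × ℤ)) := by
    ext ⟨a, b⟩
    simp only [IsNbr, Set.mem_ofPred_eq, Finset.coe_filter, Finset.mem_insert, Finset.mem_singleton,
      Prod.mk.injEq, ne_eq, abs_le, and_comm (a := (a, b) ∈ S)]
    refine and_congr_left fun _ => ?_
    omega
  rw [nbrCount, h, Set.ncard_coe_finset, Finset.card_filter]
  repeat rw [Finset.sum_insert (by
    simp only [Finset.mem_insert, Finset.mem_singleton, Prod.mk.injEq]; omega)]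
  simp only [Finset.sum_singleton, mooreDeg, sideDeg, cornerDeg, cellState, Set.indicator_apply,
    Pi.one_apply, Nat.cast_add, Nat.cast_ite, Nat.cast_one, Nat.cast_zero]
  ring

theorem nbrCount_unroll (T : Set (M × N)) (x y : ℤ) :
    (nbrCount (unroll T) (x, y) : ℤ) = mooreDeg T x y := by
  have hcell (x y : ℤ) : cellState (unroll T) x y = cellState T (x : M) (y : N) := rfl
  simp only [nbrCount_eq_mooreDeg, mooreDeg, sideDeg, cornerDeg, hcell, Int.cast_add,
    Int.cast_sub, Int.cast_one]

end Unroll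

section Period

variable {p q : ℕ}

theorem Periodic.exists_eq_unroll {S : Set (ℤ × ℤ)} (hS : Periodic S) :
    ∃ (p q : ℕ) (_ : NeZero p) (_ : NeZero q) (T : Set (ZMod p × ZMod q)), S = unroll T := by
  obtain ⟨p, q, hp, hq, hSp, hSq⟩ := hS
  lift p to ℕ using hp.le
  lift q to ℕ using hq.le
  refine ⟨p, q, ⟨by omega⟩, ⟨by omega⟩, Prod.map Int.cast Int.cast '' S, ?_⟩
  have hx (y : ℤ) : Function.Periodic (fun x : ℤ => (x, y) ∈ S) p := fun x =>
    propext (hSp (x, y)).symm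
  have hy (x : ℤ) : Function.Periodic (fun y : ℤ => (x, y) ∈ S) q := fun y =>
    propext (hSq (x, y)).symm
  ext ⟨x, y⟩
  refine ⟨fun h => ⟨(x, y), h, rfl⟩, ?_⟩
  rintro ⟨⟨x', y'⟩, h, hcast⟩
  obtain ⟨hx', hy'⟩ := Prod.mk.inj hcast
  rw [ZMod.intCast_eq_intCast_iff_dvd_sub] at hx' hy'
  obtain ⟨m, hm⟩ := hx'
  obtain ⟨n, hn⟩ := hy'
  obtain rfl : x = x' + m * p := by linarith
  obtain rfl : y = y' + n * q := by linarith
  exact ((hx _).int_mul m x').mpr (((hy _).int_mul n y').mpr h)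

variable [NeZero p] [NeZero q]

theorem card_filter_Ico_intCast_eq (a : ℤ) (m : ℕ) (u : ZMod p) :
    ((Finset.Ico a (a + m * p)).filter fun x : ℤ => (x : ZMod p) = u).card = m := by
  have hp : (0 : ℤ) < p := mod_cast NeZero.pos p
  have hp' : (p : ℚ) ≠ 0 := mod_cast NeZero.ne p
  obtain ⟨v, rfl⟩ := ZMod.intCast_surjective u
  have hshift : (((a + m * p : ℤ) : ℚ) - v) / p = (a - v) / p + m := by
    push_cast
    field_simp
    ring
  have hcard := Int.Ico_filter_modEq_card a (a + m * p) hp v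
  rw [Int.cast_natCast, hshift, Int.ceil_add_natCast, add_sub_cancel_left,
    max_eq_left (Int.natCast_nonneg m)] at hcard
  simp only [ZMod.intCast_eq_intCast_iff]
  exact_mod_cast hcard

theorem card_filter_square_intCast_eq (k : ℕ) (t : ZMod p × ZMod q) {r : ℤ} (hr : r = k * p * q) :
    ((Finset.Ico (-r) r ×ˢ Finset.Ico (-r) r).filter fun z : ℤ × ℤ =>
      ((z.1 : ZMod p), (z.2 : ZMod q)) = t).card = 2 * k * q * (2 * k * p) := by
  have hx := card_filter_Ico_intCast_eq (-r) (2 * k * q) t.1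
  have hy := card_filter_Ico_intCast_eq (-r) (2 * k * p) t.2
  rw [show -r + (2 * k * q : ℕ) * p = r by rw [hr]; push_cast; ring] at hx
  rw [show -r + (2 * k * p : ℕ) * q = r by rw [hr]; push_cast; ring] at hy
  rw [← hx, ← hy, ← Finset.card_product, ← Finset.filter_product]
  simp only [Prod.ext_iff]

theorem ncard_unroll_inter_box_le (T : Set (ZMod p × ZMod q)) (k : ℕ) :
    (unroll T ∩ box (k * p * q)).ncard ≤ 2 * k * q * (2 * k * p) * T.ncard := by
  classical
  set r : ℤ := ((k * p * q : ℕ) : ℤ) with hr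
  set square := Finset.Ico (-r) r ×ˢ Finset.Ico (-r) r
  have hsub : unroll T ∩ box (k * p * q) ⊆ square.filter (· ∈ unroll T) := by
    rintro ⟨x, y⟩ ⟨hT, hx, hy⟩
    rw [abs_lt] at hx hy
    simp only [Finset.coe_filter, Set.mem_ofPred_eq, square, Finset.mem_product, Finset.mem_Ico]
    exact ⟨⟨⟨hx.1.le, hx.2⟩, hy.1.le, hy.2⟩, hT⟩
  calc (unroll T ∩ box (k * p * q)).ncard
      ≤ (square.filter (· ∈ unroll T)).card := by
        rw [← Set.ncard_coe_finset]
        exact Set.ncard_le_ncard hsub (Finset.finite_toSet _)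
    _ ≤ 2 * k * q * (2 * k * p) * T.toFinset.card := by
        refine Finset.card_le_mul_card_image_of_maps_to
          (f := fun z : ℤ × ℤ => ((z.1 : ZMod p), (z.2 : ZMod q)))
          (fun z hz => Set.mem_toFinset.mpr (Finset.mem_filter.mp hz).2) _ fun t _ => ?_
        rw [← card_filter_square_intCast_eq k t (hr.trans (by push_cast; rfl))]
        exact Finset.card_le_card (Finset.filter_subset_filter _ (Finset.filter_subset _ _))
    _ = 2 * k * q * (2 * k * p) * T.ncard := by rw [Set.ncard_eq_toFinset_card']

theorem HasDensity.mul_card_le_ncard {T : Set (ZMod p × ZMod q)} {d : ℝ}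
    (hd : HasDensity (unroll T) d) : d * Fintype.card (ZMod p × ZMod q) ≤ T.ncard := by
  have hp : (p : ℝ) ≠ 0 := NeZero.ne _
  have hq : (q : ℝ) ≠ 0 := NeZero.ne _
  have hr : Tendsto (fun k : ℕ => k * p * q) atTop atTop := by
    simp only [mul_assoc]
    exact tendsto_id.atTop_mul_const' (Nat.mul_pos (NeZero.pos p) (NeZero.pos q))
  have hratio : Tendsto (fun r : ℕ => ((2 * r : ℕ) : ℝ) / ((2 * r : ℕ) + -1)) atTop (𝓝 1) :=
    (tendsto_natCast_div_add_atTop (-1 : ℝ)).comp (tendsto_id.const_mul_atTop' two_pos)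
  have hbound := ((hratio.comp hr).pow 2).const_mul ((T.ncard : ℝ) / (p * q))
  rw [one_pow, mul_one] at hbound
  suffices d ≤ T.ncard / (p * q) by
    rw [Fintype.card_prod, ZMod.card, ZMod.card, Nat.cast_mul]
    exact (le_div_iff₀ (by positivity)).mp this
  refine le_of_tendsto_of_tendsto' (hd.comp hr) hbound fun k => ?_
  calc ((unroll T ∩ box (k * p * q)).ncard : ℝ) / (2 * (k * p * q : ℕ) - 1) ^ 2
      ≤ (2 * k * q * (2 * k * p) * T.ncard : ℕ) / (2 * (k * p * q : ℕ) - 1) ^ 2 := by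
        gcongr
        exact ncard_unroll_inter_box_le T k
    _ = T.ncard / (p * q) *
          (((2 * (k * p * q) : ℕ) : ℝ) / ((2 * (k * p * q) : ℕ) + -1)) ^ 2 := by
        rw [div_pow, ← sub_eq_add_neg]
        push_cast
        field_simp

end Period

theorem periodic_halfDensity_maxDegThree_isStillLife (S : Set (ℤ × ℤ))
    (hper : Periodic S) (hdeg : ∀ x ∈ S, nbrCount S x ≤ 3)
    (hdens : HasDensity S (1 / 2)) :
    (∀ x ∈ S, 2 ≤ nbrCount S x) ∧ (∀ y ∉ S, 4 ≤ nbrCount S y) ∧ StillLife S := by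
  obtain ⟨p, q, _, _, T, rfl⟩ := hper.exists_eq_unroll
  have hT : IsNeutral T := by
    refine isNeutral_of_card_le_two_mul_ncard (fun x y h => ?_) ?_
    · obtain ⟨x, rfl⟩ := ZMod.intCast_surjective x
      obtain ⟨y, rfl⟩ := ZMod.intCast_surjective y
      rw [← nbrCount_unroll]
      exact_mod_cast hdeg (x, y) h
    · have hcard := hdens.mul_card_le_ncard
      rw [← Nat.cast_le (α := ℝ), Nat.cast_mul, Nat.cast_ofNat]
      linarith
  have hlive : ∀ x ∈ unroll T, 2 ≤ nbrCount (unroll T) x := fun ⟨x, y⟩ h => by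
    rw [← Nat.cast_le (α := ℤ), nbrCount_unroll]
    exact hT.two_le_mooreDeg h
  have hdead : ∀ y ∉ unroll T, 4 ≤ nbrCount (unroll T) y := fun ⟨x, y⟩ h => by
    rw [← Nat.cast_le (α := ℤ), nbrCount_unroll]
    exact hT.four_le_mooreDeg h
  exact ⟨hlive, hdead, fun y hy h => absurd (hdead y hy) (by omega), hlive, hdeg⟩
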